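/- Let m = p_1^{m_1} p_2^{m_2} ⋯ p_t^{m_t}, where t ≥ 2, m_1,…,m_t are positive integers and p_1 < p_2 < ⋯ < p_t are primes. Then for all i and k with 1 ≤ i < k ≤ t, we have φ(m/p_i) ≥ φ(m/p_k), with equality if and only if k = 2, (p_1, p_2) = (2, 3), m_1 ≥ 2 and m_2 = 1. -/

import Mathlib

/-!
For a prime `p` dividing `m`, the quotient `φ(m) / φ(m / p)` is `p` if `p² ∣ m` and `p - 1`
otherwise. For primes `p < q` it is therefore at most `p` at `p` and at least `q - 1 ≥ p` at `q`.
Equality forces `p² ∣ m`, `q² ∤ m` and `q = p + 1`, and the only consecutive primes are `2` and `3`.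
-/

section TotientRatio

variable {m p q : ℕ}

/-- The value of `φ(m) / φ(m / p)` for a prime divisor `p` of `m ≠ 0`, encoded by its closed
form so that no division occurs. -/
def totientRatio (m p : ℕ) : ℕ :=
  if p ^ 2 ∣ m then p else p - 1

theorem totientRatio_mul_totient_div (hp : p.Prime) (hpm : p ∣ m) :
    totientRatio m p * Nat.totient (m / p) = Nat.totient m := by
  obtain ⟨n, rfl⟩ := hpm
  have sq_dvd_iff : p ^ 2 ∣ p * n ↔ p ∣ n := by
    rw [sq, Nat.mul_dvd_mul_iff_left hp.pos]
  rw [Nat.mul_div_cancel_left n hp.pos, totientRatio]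
  split_ifs with h
  · exact (Nat.totient_mul_of_prime_of_dvd hp (sq_dvd_iff.1 h)).symm
  · exact (Nat.totient_mul_of_prime_of_not_dvd hp (mt sq_dvd_iff.2 h)).symm

theorem totientRatio_monotone (m : ℕ) : Monotone (totientRatio m) :=
  monotone_nat_of_le_succ fun p => by
    unfold totientRatio
    split_ifs <;> omega

theorem totientRatio_eq_totientRatio_iff (hp0 : 0 < p) (hpq : p < q) :
    totientRatio m p = totientRatio m q ↔ q = p + 1 ∧ p ^ 2 ∣ m ∧ ¬q ^ 2 ∣ m := by
  unfold totientRatio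
  split_ifs <;> grind

end TotientRatio

theorem prime_and_prime_succ_iff {p : ℕ} : p.Prime ∧ (p + 1).Prime ↔ p = 2 := by
  constructor
  · rintro ⟨hp, hp'⟩
    have := hp.two_le
    have := hp.eq_two_or_odd
    have := hp'.eq_two_or_odd
    omega
  · rintro rfl
    exact ⟨Nat.prime_two, Nat.prime_three⟩

section TotientDiv

variable {m p q : ℕ}

theorem totient_div_le_totient_div_of_le (hp : p.Prime) (hq : q.Prime) (hpm : p ∣ m) (hqm : q ∣ m)
    (hpq : p ≤ q) : Nat.totient (m / q) ≤ Nat.totient (m / p) := by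
  obtain rfl | hm := m.eq_zero_or_pos
  · simp
  have hpos : 0 < totientRatio m p :=
    Nat.pos_of_mul_pos_right (totientRatio_mul_totient_div hp hpm ▸ Nat.totient_pos.2 hm)
  refine le_of_mul_le_mul_left ?_ hpos
  calc totientRatio m p * Nat.totient (m / q)
      ≤ totientRatio m q * Nat.totient (m / q) :=
        Nat.mul_le_mul_right _ (totientRatio_monotone m hpq)
    _ = totientRatio m p * Nat.totient (m / p) := by
        rw [totientRatio_mul_totient_div hq hqm, totientRatio_mul_totient_div hp hpm]

theorem totient_div_eq_totient_div_iff_totientRatio_eq (hm : m ≠ 0) (hp : p.Prime) (hq : q.Prime)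
    (hpm : p ∣ m) (hqm : q ∣ m) :
    Nat.totient (m / p) = Nat.totient (m / q) ↔ totientRatio m p = totientRatio m q := by
  have hφ : totientRatio m p * Nat.totient (m / p) = totientRatio m q * Nat.totient (m / q) := by
    rw [totientRatio_mul_totient_div hp hpm, totientRatio_mul_totient_div hq hqm]
  have hprod : totientRatio m q * Nat.totient (m / q) ≠ 0 := by
    rw [totientRatio_mul_totient_div hq hqm]
    exact (Nat.totient_pos.2 (Nat.pos_of_ne_zero hm)).ne'
  constructor <;> intro h <;> rw [h] at hφ
  · exact mul_right_cancel₀ (right_ne_zero_of_mul hprod) hφ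
  · exact mul_left_cancel₀ (left_ne_zero_of_mul hprod) hφ

theorem totient_div_eq_totient_div_iff_of_lt (hm : m ≠ 0) (hp : p.Prime) (hq : q.Prime)
    (hpm : p ∣ m) (hqm : q ∣ m) (hpq : p < q) :
    Nat.totient (m / p) = Nat.totient (m / q) ↔ p = 2 ∧ q = 3 ∧ p ^ 2 ∣ m ∧ ¬q ^ 2 ∣ m := by
  rw [totient_div_eq_totient_div_iff_totientRatio_eq hm hp hq hpm hqm,
    totientRatio_eq_totientRatio_iff hp.pos hpq]
  constructor
  · rintro ⟨rfl, hdvd⟩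
    obtain rfl := prime_and_prime_succ_iff.1 ⟨hp, hq⟩
    exact ⟨rfl, rfl, hdvd⟩
  · rintro ⟨rfl, rfl, hdvd⟩
    exact ⟨rfl, hdvd⟩

end TotientDiv

theorem prime_pow_dvd_prod_pow_iff {ι : Type*} {s : Finset ι} {p e : ι → ℕ} {i : ι} {n : ℕ}
    (hp : ∀ j ∈ s, (p j).Prime) (hinj : Set.InjOn p s) (hi : i ∈ s) :
    p i ^ n ∣ ∏ j ∈ s, p j ^ e j ↔ n ≤ e i := by
  have hne : ∀ j ∈ s, p j ^ e j ≠ 0 := fun j hj => pow_ne_zero _ (hp j hj).ne_zero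
  have hother : ∀ j ∈ s, j ≠ i → (p j ^ e j).factorization (p i) = 0 := fun j hj hji => by
    rw [(hp j hj).factorization_pow, Finsupp.single_eq_of_ne (hinj.ne hi hj hji.symm)]
  rw [(hp i hi).pow_dvd_iff_le_factorization (Finset.prod_ne_zero_iff.2 hne),
    Nat.factorization_prod_apply hne, Finset.sum_eq_single_of_mem i hi hother,
    (hp i hi).factorization_pow, Finsupp.single_eq_same]

theorem apply_zero_add_le_of_strictMonoOn_Iio {f : ℕ → ℕ} {t i : ℕ}
    (hf : StrictMonoOn f (Set.Iio t)) (hi : i < t) : f 0 + i ≤ f i := by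
  induction i with
  | zero => rfl
  | succ i ih =>
    have hstep : f i < f (i + 1) := hf (Nat.lt_of_succ_lt hi) hi i.lt_succ_self
    have := ih (Nat.lt_of_succ_lt hi)
    omega

/-- Lemma 2.5: `φ(m/p_i) ≥ φ(m/p_k)` for `i < k`, with equality iff `k` is the second
prime, `(p₁,p₂) = (2,3)`, `m₁ ≥ 2` and `m₂ = 1` (indices here are 0-based). -/
theorem totient_div_prime_antitone (m t : ℕ) (p e : ℕ → ℕ) (ht : 2 ≤ t)
    (hp : ∀ i, i < t → (p i).Prime)
    (hlt : ∀ i j, i < j → j < t → p i < p j)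
    (he : ∀ i, i < t → 0 < e i)
    (hm : m = ∏ i ∈ Finset.range t, p i ^ e i) :
    ∀ i k, i < k → k < t →
      Nat.totient (m / p k) ≤ Nat.totient (m / p i) ∧
        (Nat.totient (m / p i) = Nat.totient (m / p k) ↔
          (k = 1 ∧ p 0 = 2 ∧ p 1 = 3 ∧ 2 ≤ e 0 ∧ e 1 = 1)) := by
  intro i k hik hk
  have hi : i < t := hik.trans hk
  have hmono : StrictMonoOn p (Set.Iio t) := fun a _ b hb hab => hlt a b hab hb
  have hpow {j n} (hj : j < t) : p j ^ n ∣ m ↔ n ≤ e j := by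
    rw [hm]
    exact prime_pow_dvd_prod_pow_iff (by simpa using hp) (by simpa using hmono.injOn) (by simpa)
  have hdvd {j} (hj : j < t) : p j ∣ m := pow_one (p j) ▸ (hpow hj).2 (he j hj)
  have hm0 : m ≠ 0 := fun h => (e i).lt_irrefl ((hpow hi).1 (h ▸ dvd_zero _))
  have hpik : p i < p k := hlt i k hik hk
  refine ⟨totient_div_le_totient_div_of_le (hp i hi) (hp k hk) (hdvd hi) (hdvd hk) hpik.le, ?_⟩
  rw [totient_div_eq_totient_div_iff_of_lt hm0 (hp i hi) (hp k hk) (hdvd hi) (hdvd hk) hpik,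
    hpow hi, hpow hk]
  have hek : 0 < e k := he k hk
  constructor
  · rintro ⟨hpi, hpk, hei, hek'⟩
    have hp0 : 2 ≤ p 0 := (hp 0 (by omega)).two_le
    have hp0k : p 0 + k ≤ p k := apply_zero_add_le_of_strictMonoOn_Iio hmono hk
    obtain ⟨rfl, rfl⟩ : i = 0 ∧ k = 1 := by omega
    exact ⟨rfl, hpi, hpk, hei, by omega⟩
  · rintro ⟨rfl, hp0, hp1, he0, he1⟩
    obtain rfl : i = 0 := by omega
    exact ⟨hp0, hp1, he0, by omega⟩
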